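/- Let M be a D-factored finite MDP and let π_b, π_e be factored policies satisfying per-factor absolute continuity. Let τ^(1), …, τ^(N) be i.i.d. T-step trajectories drawn from P^τ_{π_b}. Then the decomposed per-decision importance-sampling estimator is unbiased: E[ Σ_{d=1}^D (1/N) Σ_{n=1}^N Σ_{t=0}^{T-1} γ^t ρ^d_{0:t}(τ^(n)) · r_d(z^{(n),d}_t, a^{(n),d}_t) ] = V_{π_e} = E_{τ∼P^τ_{π_e}}[ Σ_{t=0}^{T-1} γ^t r(s_t, a_t) ]. -/

import Mathlib

/-!
For a fixed factor `d` and time `t`, the pair `(z_t^d, a_t^d)` is generated by a Markov chain on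
`Z d` alone, since the other factors' policies and transitions are normalised and sum out.
Multiplying the behaviour weights of that chain by the ratios `πed d / πbd d` up to time `t` turns
them, by absolute continuity, into the evaluation weights, and the steps after time `t` sum to `1`.
Hence `E_b[ρ^d_{0:t} r_d(z_t^d, a_t^d)] = E_e[r_d(z_t^d, a_t^d)]`, even when the initial distribution
does not factor.

Formally, `sum_trajP_mul_weight` evaluates the trajectory sum, weighted by a product of per-step
factors, by the backward recursion `stepValue`, and `stepValue_factored` shows that in a factored
MDP this recursion depends only on the coordinate `d`, through the kernel (policy times weight).
The behaviour policy with weight `πed d / πbd d` and the evaluation policy with weight `1` give the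
same kernel. The average over `N` i.i.d. trajectories reduces to a single one by the
marginalisation lemma `sum_prod_mul_eval`, and linearity in `d` and `t` finishes the proof.
-/

open scoped BigOperators Classical

/-- A `T`-step trajectory: states `s_0, …, s_T` and actions `a_0, …, a_{T-1}`. -/
abbrev Traj (S A : Type) (T : ℕ) := (Fin (T + 1) → S) × (Fin T → A)

/-- Probability of the trajectory `τ` under initial distribution `d1`, transition kernel
`p` and policy `π`: `P_π(τ) = d1(s_0) ∏_{t=0}^{T-1} π(a_t|s_t) p(s_{t+1}|s_t,a_t)`. -/
def trajP {S A : Type} [Fintype S] [Fintype A] (T : ℕ)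
    (d1 : S → ℝ) (p : S → A → S → ℝ) (π : S → A → ℝ) (τ : Traj S A T) : ℝ :=
  d1 (τ.1 0) *
    ∏ t : Fin T, π (τ.1 t.castSucc) (τ.2 t) * p (τ.1 t.castSucc) (τ.2 t) (τ.1 t.succ)

/-- Marginalisation of a product of normalised weights to the coordinate `i₀`. -/
lemma sum_prod_mul_eval {ι : Type} [Fintype ι] [DecidableEq ι]
    {X : ι → Type} [∀ i, Fintype (X i)]
    (q : ∀ i, X i → ℝ) (hq : ∀ i, ∑ x, q i x = 1) (i₀ : ι) (g : X i₀ → ℝ) :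
    ∑ x : ∀ i, X i, (∏ i, q i (x i)) * g (x i₀) = ∑ y, q i₀ y * g y := by
  -- `g` is absorbed into the product as a factor that is `1` at every other coordinate.
  let G : ∀ i, X i → ℝ := Function.update (fun _ _ => 1) i₀ g
  have hG₀ : G i₀ = g := Function.update_self _ _ _
  have hG : ∀ i, i ≠ i₀ → G i = fun _ => 1 := fun i hi => Function.update_of_ne hi _ _
  have h1 : ∀ x : ∀ i, X i, (∏ i, q i (x i)) * g (x i₀) = ∏ i, q i (x i) * G i (x i) := by
    intro x
    rw [Finset.prod_mul_distrib, Fintype.prod_eq_single (f := fun i => G i (x i)) i₀, hG₀]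
    intro i hi
    simp [hG i hi]
  have h2 : ∏ i, ∑ y, q i y * G i y = ∑ x : ∀ i, X i, ∏ i, q i (x i) * G i (x i) := by
    rw [Finset.prod_univ_sum, Fintype.piFinset_univ]
  rw [Finset.sum_congr rfl fun x _ => h1 x, ← h2, Fintype.prod_eq_single i₀, hG₀]
  intro i hi
  simp [hG i hi, hq]

lemma sum_prod_eq_one {ι : Type} [Fintype ι] [DecidableEq ι]
    {X : ι → Type} [∀ i, Fintype (X i)]
    (q : ∀ i, X i → ℝ) (hq : ∀ i, ∑ x, q i x = 1) :
    ∑ x : ∀ i, X i, ∏ i, q i (x i) = 1 := by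
  have h2 : ∏ i, ∑ y, q i y = ∑ x : ∀ i, X i, ∏ i, q i (x i) := by
    rw [Finset.prod_univ_sum, Fintype.piFinset_univ]
  rw [← h2]
  simp [hq]

section Chain

variable {S A : Type} [Fintype S] [Fintype A]

/-- First-step decomposition: after `(s, a)` the remaining trajectory starts from `p s a`. -/
lemma sum_trajP_succ (T : ℕ) (d1 : S → ℝ) (p : S → A → S → ℝ) (π : S → A → ℝ)
    (F : Traj S A (T + 1) → ℝ) :
    ∑ τ, trajP (T + 1) d1 p π τ * F τ =
      ∑ s, d1 s * ∑ a, π s a * ∑ τ : Traj S A T,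
        trajP T (p s a) p π τ * F (Fin.cons s τ.1, Fin.cons a τ.2) := by
  rw [Fintype.sum_prod_type, ← (Fin.consEquiv fun _ : Fin (T + 2) => S).sum_comp,
    Fintype.sum_prod_type]
  refine Finset.sum_congr rfl fun s _ => ?_
  have h : ∀ σ : Fin (T + 1) → S, ∑ α : Fin (T + 1) → A,
      trajP (T + 1) d1 p π (Fin.cons s σ, α) * F (Fin.cons s σ, α) =
      ∑ a, ∑ α : Fin T → A, d1 s * (π s a * (trajP T (p s a) p π (σ, α) *
        F (Fin.cons s σ, Fin.cons a α))) := by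
    intro σ
    rw [← (Fin.consEquiv fun _ : Fin (T + 1) => A).sum_comp, Fintype.sum_prod_type]
    refine Finset.sum_congr rfl fun a _ => Finset.sum_congr rfl fun α _ => ?_
    change trajP (T + 1) d1 p π (Fin.cons s σ, Fin.cons a α) *
      F (Fin.cons s σ, Fin.cons a α) = _
    simp only [trajP, Fin.prod_univ_succ, Fin.castSucc_zero, Fin.cons_zero,
      Fin.cons_succ, ← Fin.succ_castSucc]
    ring
  refine (Finset.sum_congr rfl fun σ _ => h σ).trans ?_
  rw [Finset.sum_comm, Finset.mul_sum]
  refine Finset.sum_congr rfl fun a _ => ?_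
  simp only [Fintype.sum_prod_type, Finset.mul_sum]

lemma sum_trajP (T : ℕ) (d1 : S → ℝ) (p : S → A → S → ℝ) (π : S → A → ℝ)
    (hp : ∀ s a, ∑ s', p s a s' = 1) (hπ : ∀ s, ∑ a, π s a = 1) :
    ∑ τ, trajP T d1 p π τ = ∑ s, d1 s := by
  induction T generalizing d1 with
  | zero =>
    rw [Fintype.sum_prod_type, ← (Equiv.funUnique (Fin 1) S).symm.sum_comp]
    simp [trajP]
  | succ T ih =>
    have h := sum_trajP_succ T d1 p π (fun _ => 1)
    simp only [mul_one] at h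
    rw [h]
    simp [ih, hp, hπ]

/-- The value, from a given state, of collecting the reward `g` once, `t` steps ahead, where `k s a`
is the weight of action `a` in state `s` (not necessarily a probability). -/
def stepValue (k : S → A → ℝ) (p : S → A → S → ℝ) (g : S → A → ℝ) : ℕ → S → ℝ
  | 0, s => ∑ a, k s a * g s a
  | t + 1, s => ∑ a, k s a * ∑ s', p s a s' * stepValue k p g t s'

/-- The steps up to time `t` carry the weight `π * w`; those after time `t` sum to `1`. -/
lemma sum_trajP_mul_weight (T : ℕ) (d1 : S → ℝ) (p : S → A → S → ℝ) (π w g : S → A → ℝ)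
    (hp : ∀ s a, ∑ s', p s a s' = 1) (hπ : ∀ s, ∑ a, π s a = 1) (t : Fin T) :
    ∑ τ, trajP T d1 p π τ * ((∏ t' ∈ Finset.Iic t, w (τ.1 t'.castSucc) (τ.2 t')) *
        g (τ.1 t.castSucc) (τ.2 t)) =
      ∑ s, d1 s * stepValue (fun s a => π s a * w s a) p g t s := by
  -- As a product over all times, the weight can be split at time `0`.
  have hI : ∀ {n : ℕ} (t : Fin n) (f : Fin n → ℝ),
      ∏ t' ∈ Finset.Iic t, f t' = ∏ t', if t' ≤ t then f t' else 1 := by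
    intro n t f
    rw [← Finset.prod_filter]
    congr 1
    ext x
    simp
  induction T generalizing d1 with
  | zero => exact t.elim0
  | succ T ih =>
    rw [sum_trajP_succ]
    refine Finset.sum_congr rfl fun s _ => ?_
    congr 1
    refine Fin.cases ?_ (fun t => ?_) t
    · refine Finset.sum_congr rfl fun a _ => ?_
      simp only [hI, Fin.prod_univ_succ, Fin.castSucc_zero, Fin.cons_zero]
      simp only [Fin.le_zero_iff, Fin.succ_ne_zero, if_true, if_false, Finset.prod_const_one,
        mul_one]
      rw [← Finset.sum_mul, sum_trajP T _ p π hp hπ, hp, one_mul, mul_assoc]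
    · refine Finset.sum_congr rfl fun a _ => ?_
      rw [← ih (p s a) t, mul_assoc]
      congr 1
      rw [Finset.mul_sum]
      refine Finset.sum_congr rfl fun τ _ => ?_
      simp only [hI, Fin.prod_univ_succ, Fin.castSucc_zero, Fin.cons_zero, Fin.cons_succ,
        ← Fin.succ_castSucc, Fin.succ_le_succ_iff, Fin.zero_le, if_true]
      ring

end Chain

/-- In a factored MDP the other factors sum out of `stepValue`. -/
lemma stepValue_factored {D : ℕ} {Z Act : Fin D → Type}
    [∀ d, Fintype (Z d)] [∀ d, Fintype (Act d)]
    (pd : ∀ d, Z d → Act d → Z d → ℝ) (hpd : ∀ d z a, ∑ z', pd d z a z' = 1)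
    (πd : ∀ d, Z d → Act d → ℝ) (hπd : ∀ d z, ∑ a, πd d z a = 1)
    (d : Fin D) (w g : Z d → Act d → ℝ) (t : ℕ) (s : ∀ d, Z d) :
    stepValue (fun (s : ∀ d, Z d) (a : ∀ d, Act d) => (∏ i, πd i (s i) (a i)) * w (s d) (a d))
        (fun s a s' => ∏ i, pd i (s i) (a i) (s' i)) (fun s a => g (s d) (a d)) t s =
      stepValue (fun z a => πd d z a * w z a) (pd d) g t (s d) := by
  induction t generalizing s with
  | zero =>
    simp only [stepValue, mul_assoc]
    exact sum_prod_mul_eval (fun i => πd i (s i)) (fun i => hπd i (s i)) d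
      (fun y => w (s d) y * g (s d) y)
  | succ t ih =>
    simp only [stepValue, ih]
    have h : ∀ a : ∀ d, Act d, ∑ s' : ∀ d, Z d, (∏ i, pd i (s i) (a i) (s' i)) *
          stepValue (fun z a => πd d z a * w z a) (pd d) g t (s' d) =
        ∑ z', pd d (s d) (a d) z' * stepValue (fun z a => πd d z a * w z a) (pd d) g t z' :=
      fun a => sum_prod_mul_eval (fun i => pd i (s i) (a i)) (fun i => hpd i (s i) (a i)) d _
    simp only [h, mul_assoc]
    exact sum_prod_mul_eval (fun i => πd i (s i)) (fun i => hπd i (s i)) d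
      (fun y => w (s d) y * ∑ z', pd d (s d) y z' *
        stepValue (fun z a => πd d z a * (w z a)) (pd d) g t z')

/-- In a `D`-factored finite MDP, with factored behaviour and evaluation
policies satisfying per-factor absolute continuity, the decomposed per-decision
importance-sampling estimator computed from `N` i.i.d. trajectories drawn from `π_b` is an
unbiased estimator of the value `V_{π_e}` of the evaluation policy. -/
theorem decomposed_PDIS_unbiased
    {D : ℕ} (Z Act : Fin D → Type)
    [∀ d, Fintype (Z d)] [∀ d, Fintype (Act d)]
    [∀ d, Nonempty (Z d)] [∀ d, Nonempty (Act d)]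
    (T N : ℕ) (hN : 0 < N)
    (γ : ℝ) (hγ0 : 0 ≤ γ) (hγ1 : γ ≤ 1)
    -- initial distribution
    (d1 : (∀ d, Z d) → ℝ) (hd1_nonneg : ∀ s, 0 ≤ d1 s) (hd1_sum : ∑ s, d1 s = 1)
    -- full MDP transition kernel and reward
    (p : (∀ d, Z d) → (∀ d, Act d) → (∀ d, Z d) → ℝ)
    (r : (∀ d, Z d) → (∀ d, Act d) → ℝ)
    -- factored structure
    (pd : ∀ d, Z d → Act d → Z d → ℝ)
    (rd : ∀ d, Z d → Act d → ℝ)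
    (hpd_nonneg : ∀ d z a z', 0 ≤ pd d z a z')
    (hpd_sum : ∀ d z a, ∑ z', pd d z a z' = 1)
    (hp : ∀ s a s', p s a s' = ∏ d, pd d (s d) (a d) (s' d))
    (hr : ∀ s a, r s a = ∑ d, rd d (s d) (a d))
    -- factored behaviour and evaluation policies
    (πb πe : (∀ d, Z d) → (∀ d, Act d) → ℝ)
    (πbd πed : ∀ d, Z d → Act d → ℝ)
    (hπbd_nonneg : ∀ d z a, 0 ≤ πbd d z a) (hπbd_sum : ∀ d z, ∑ a, πbd d z a = 1)
    (hπed_nonneg : ∀ d z a, 0 ≤ πed d z a) (hπed_sum : ∀ d z, ∑ a, πed d z a = 1)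
    (hπb : ∀ s a, πb s a = ∏ d, πbd d (s d) (a d))
    (hπe : ∀ s a, πe s a = ∏ d, πed d (s d) (a d))
    -- per-factor absolute continuity
    (habs : ∀ d z a, πbd d z a = 0 → πed d z a = 0) :
    -- expectation (over N i.i.d. trajectories from π_b) of the decomposed
    -- per-decision IS estimator
    (∑ τs : Fin N → Traj (∀ d, Z d) (∀ d, Act d) T,
        (∏ n, trajP T d1 p πb (τs n)) *
          (∑ d, (1 / (N : ℝ)) * ∑ n, ∑ t : Fin T,
            γ ^ (t : ℕ) *
              (if 0 < trajP T d1 p πb (τs n) then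
                  ∏ t' ∈ Finset.Iic t,
                    πed d ((τs n).1 t'.castSucc d) ((τs n).2 t' d) /
                      πbd d ((τs n).1 t'.castSucc d) ((τs n).2 t' d)
                else 0) *
              rd d ((τs n).1 t.castSucc d) ((τs n).2 t d)))
    -- equals the value of the evaluation policy
    = ∑ τ : Traj (∀ d, Z d) (∀ d, Act d) T,
        trajP T d1 p πe τ * ∑ t : Fin T, γ ^ (t : ℕ) * r (τ.1 t.castSucc) (τ.2 t) := by
  obtain rfl : p = fun s a s' => ∏ d, pd d (s d) (a d) (s' d) := by
    funext s a s'; exact hp s a s'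
  obtain rfl : πb = fun s a => ∏ d, πbd d (s d) (a d) := by funext s a; exact hπb s a
  obtain rfl : πe = fun s a => ∏ d, πed d (s d) (a d) := by funext s a; exact hπe s a
  set p : (∀ d, Z d) → (∀ d, Act d) → (∀ d, Z d) → ℝ :=
    fun s a s' => ∏ d, pd d (s d) (a d) (s' d) with hpdef
  set πb : (∀ d, Z d) → (∀ d, Act d) → ℝ := fun s a => ∏ d, πbd d (s d) (a d) with hbdef
  set πe : (∀ d, Z d) → (∀ d, Act d) → ℝ := fun s a => ∏ d, πed d (s d) (a d) with hedef
  have hp1 : ∀ s a, ∑ s', p s a s' = 1 := fun s a =>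
    sum_prod_eq_one (fun d => pd d (s d) (a d)) fun d => hpd_sum d _ _
  have hb1 : ∀ s, ∑ a, πb s a = 1 := fun s =>
    sum_prod_eq_one (fun d => πbd d (s d)) fun d => hπbd_sum d _
  have he1 : ∀ s, ∑ a, πe s a = 1 := fun s =>
    sum_prod_eq_one (fun d => πed d (s d)) fun d => hπed_sum d _
  have hPb : ∑ τ, trajP T d1 p πb τ = 1 := by rw [sum_trajP T d1 p πb hp1 hb1, hd1_sum]
  have hPb0 : ∀ τ, 0 ≤ trajP T d1 p πb τ := fun τ =>
    mul_nonneg (hd1_nonneg _) <| Finset.prod_nonneg fun t _ => mul_nonneg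
      (Finset.prod_nonneg fun d _ => hπbd_nonneg _ _ _)
      (Finset.prod_nonneg fun d _ => hpd_nonneg _ _ _ _)
  -- The guard in the importance weight is harmless: it only acts where the probability vanishes.
  have hguard : ∀ τ (x y : ℝ), trajP T d1 p πb τ * ((if 0 < trajP T d1 p πb τ then x else 0) * y) =
      trajP T d1 p πb τ * (x * y) := by
    intro τ x y
    split_ifs with h
    · rfl
    · rw [le_antisymm (not_lt.mp h) (hPb0 τ)]; simp
  have hkernel : ∀ d, (fun z a => πbd d z a * (πed d z a / πbd d z a)) =
      fun z a => πed d z a * 1 := by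
    intro d
    funext z a
    rw [mul_one, mul_div_assoc']
    exact mul_div_cancel_left_of_imp (habs d z a)
  have key : ∀ (d : Fin D) (t : Fin T),
      ∑ τ, trajP T d1 p πb τ * ((∏ t' ∈ Finset.Iic t,
          πed d (τ.1 t'.castSucc d) (τ.2 t' d) / πbd d (τ.1 t'.castSucc d) (τ.2 t' d)) *
          rd d (τ.1 t.castSucc d) (τ.2 t d)) =
        ∑ τ, trajP T d1 p πe τ * rd d (τ.1 t.castSucc d) (τ.2 t d) := by
    intro d t
    have h1 := sum_trajP_mul_weight T d1 p πb
      (fun s a => πed d (s d) (a d) / πbd d (s d) (a d)) (fun s a => rd d (s d) (a d)) hp1 hb1 t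
    have h2 := sum_trajP_mul_weight T d1 p πe
      (fun _ _ => 1) (fun s a => rd d (s d) (a d)) hp1 he1 t
    have f1 := stepValue_factored pd hpd_sum πbd hπbd_sum d
      (fun z a => πed d z a / πbd d z a) (rd d) t
    have f2 := stepValue_factored pd hpd_sum πed hπed_sum d (fun _ _ => 1) (rd d) t
    simp only [Finset.prod_const_one, one_mul] at h2
    rw [h1, h2]
    refine Finset.sum_congr rfl fun s _ => ?_
    congr 1
    refine (f1 s).trans (Eq.trans ?_ (f2 s).symm)
    rw [hkernel d]
  -- The expectation of a function of the `n`-th trajectory is a single-trajectory expectation.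
  have hiid : ∀ (n : Fin N) (F : Traj (∀ d, Z d) (∀ d, Act d) T → ℝ),
      ∑ τs : Fin N → Traj (∀ d, Z d) (∀ d, Act d) T,
        (∏ m, trajP T d1 p πb (τs m)) * F (τs n) = ∑ τ, trajP T d1 p πb τ * F τ :=
    fun n F => sum_prod_mul_eval (fun _ : Fin N => trajP T d1 p πb) (fun _ => hPb) n F
  let X : Fin D → Traj (∀ d, Z d) (∀ d, Act d) T → ℝ := fun d τ => ∑ t : Fin T,
    γ ^ (t : ℕ) * (if 0 < trajP T d1 p πb τ then ∏ t' ∈ Finset.Iic t,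
      πed d (τ.1 t'.castSucc d) (τ.2 t' d) / πbd d (τ.1 t'.castSucc d) (τ.2 t' d) else 0) *
      rd d (τ.1 t.castSucc d) (τ.2 t d)
  have hX : ∀ d, ∑ τ, trajP T d1 p πb τ * X d τ =
      ∑ t : Fin T, γ ^ (t : ℕ) * ∑ τ, trajP T d1 p πe τ * rd d (τ.1 t.castSucc d) (τ.2 t d) := by
    intro d
    simp only [X, Finset.mul_sum (s := (Finset.univ : Finset (Fin T)))]
    rw [Finset.sum_comm]
    refine Finset.sum_congr rfl fun t _ => ?_
    rw [← key d t, Finset.mul_sum]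
    refine Finset.sum_congr rfl fun τ _ => ?_
    rw [mul_assoc (γ ^ (t : ℕ)), mul_left_comm, hguard]
  have hN' : (N : ℝ) ≠ 0 := by exact_mod_cast hN.ne'
  calc _ = ∑ τs : Fin N → Traj (∀ d, Z d) (∀ d, Act d) T,
        (∏ n, trajP T d1 p πb (τs n)) * ∑ d, (1 / (N : ℝ)) * ∑ n, X d (τs n) := rfl
    _ = ∑ d, (1 / (N : ℝ)) * ∑ n : Fin N, ∑ τs : Fin N → Traj (∀ d, Z d) (∀ d, Act d) T,
        (∏ m, trajP T d1 p πb (τs m)) * X d (τs n) := by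
      simp only [Finset.mul_sum]
      rw [Finset.sum_comm]
      refine Finset.sum_congr rfl fun d _ => ?_
      rw [Finset.sum_comm]
      refine Finset.sum_congr rfl fun n _ => Finset.sum_congr rfl fun τs _ => ?_
      ring
    _ = ∑ d, ∑ t : Fin T, γ ^ (t : ℕ) *
        ∑ τ, trajP T d1 p πe τ * rd d (τ.1 t.castSucc d) (τ.2 t d) := by
      refine Finset.sum_congr rfl fun d _ => ?_
      simp only [hiid _ (X d), hX d, Finset.sum_const, Finset.card_univ, Fintype.card_fin,
        nsmul_eq_mul]
      rw [← mul_assoc, one_div, inv_mul_cancel₀ hN', one_mul]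
    _ = _ := by
      simp only [hr, Finset.mul_sum]
      rw [Finset.sum_comm, Finset.sum_comm (s := (Finset.univ : Finset (Traj _ _ T)))]
      refine Finset.sum_congr rfl fun t _ => ?_
      rw [Finset.sum_comm]
      refine Finset.sum_congr rfl fun τ _ => Finset.sum_congr rfl fun d _ => ?_
      ring
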